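/- If (T, f) solves the Duffing boundary value problem for (m, β), then f attains its maximum at t = 0, with f'(0) = 0 and f(0)² = β + √(β² + 2m²); in particular f(t)² ≤ β + √(β² + 2m²) for all t ∈ [-T, T]. -/

import Mathlib

/-!
Along a solution of `f'' = -f³ + βf` the energy `f'²/2 + (f² - β)²/4` is conserved. If the solution
is positive inside an interval and vanishes at both ends, then its slope is nonnegative at the left
end and nonpositive at the right end, so conservation of energy makes the two slopes opposite.
Reversing time about the midpoint then gives a solution with the same Cauchy data, and uniqueness
shows that the velocity at the midpoint is its own negative. There the whole energy is potential
energy, which bounds `f²` from above everywhere and, by positivity, determines it at the midpoint.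
-/

open Real

/-- The Duffing boundary value problem for `(m, β)`: a time `T > 0` and a `C^∞` function
`f` with `f'' = -f³ + β·f` on `[-T, T]`, boundary values `f(±T) = 0`,
`f'(-T) = m`, `f'(T) = -m`, and `f > 0` on `(-T, T)`. -/
def IsDuffingSolution (m : ℕ) (β T : ℝ) (f : ℝ → ℝ) : Prop :=
  0 < T ∧ ContDiff ℝ (⊤ : ℕ∞) f ∧
    (∀ t ∈ Set.Icc (-T) T, deriv (deriv f) t = -(f t) ^ 3 + β * f t) ∧
    f (-T) = 0 ∧ f T = 0 ∧ deriv f (-T) = (m : ℝ) ∧ deriv f T = -(m : ℝ) ∧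
    (∀ t ∈ Set.Ioo (-T) T, 0 < f t)

section NewtonEquation

open Set

lemma eqOn_Icc_of_isIntegralCurveOn {E : Type*} [NormedAddCommGroup E] [NormedSpace ℝ E]
    {V : E → E} {γ δ : ℝ → E} {a b : ℝ} (hV : LocallyLipschitz V)
    (hγ : IsIntegralCurveOn γ (fun _ ↦ V) (Icc a b))
    (hδ : IsIntegralCurveOn δ (fun _ ↦ V) (Icc a b)) (h : γ a = δ a) :
    EqOn γ δ (Icc a b) := by
  -- `V` is Lipschitz on the compact union of the two trajectories.
  obtain ⟨K, hK⟩ := hV.locallyLipschitzOn.exists_lipschitzOnWith_of_compact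
    ((isCompact_Icc.image_of_continuousOn hγ.continuousOn).union
      (isCompact_Icc.image_of_continuousOn hδ.continuousOn))
  refine ODE_solution_unique_of_mem_Icc_right (fun _ _ ↦ hK)
    hγ.continuousOn (fun t ht ↦ ?_) (fun t ht ↦ .inl ⟨t, Ico_subset_Icc_self ht, rfl⟩)
    hδ.continuousOn (fun t ht ↦ ?_) (fun t ht ↦ .inr ⟨t, Ico_subset_Icc_self ht, rfl⟩) h
  · exact (hγ t (Ico_subset_Icc_self ht)).mono_of_mem_nhdsWithin (Icc_mem_nhdsGE_of_mem ht)
  · exact (hδ t (Ico_subset_Icc_self ht)).mono_of_mem_nhdsWithin (Icc_mem_nhdsGE_of_mem ht)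

lemma sub_mul_nonneg_of_isLocalMinOn {f : ℝ → ℝ} {f' x y : ℝ} {s : Set ℝ}
    (hmin : IsLocalMinOn f s x) (hf : HasDerivWithinAt f f' s x) (hxy : segment ℝ x y ⊆ s) :
    0 ≤ (y - x) * f' := by
  simpa using hmin.hasFDerivWithinAt_nonneg hf.hasFDerivWithinAt
    (sub_mem_posTangentConeAt_of_segment_subset hxy)

/-- Newton's equation `x'' = F x` as an autonomous first-order system: the vector field on pairs
`(position, velocity)` whose integral curves are the pairs `(x, x')`. -/
def newtonField {E : Type*} (F : E → E) (p : E × E) : E × E :=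
  (p.2, F p.1)

lemma locallyLipschitz_newtonField {E : Type*} [PseudoEMetricSpace E] {F : E → E}
    (hF : LocallyLipschitz F) :
    LocallyLipschitz (newtonField F) :=
  LipschitzWith.prod_snd.locallyLipschitz.prodMk (hF.comp LipschitzWith.prod_fst.locallyLipschitz)

section NormedSpace

variable {E : Type*} [NormedAddCommGroup E] [NormedSpace ℝ E] {F : E → E} {γ : ℝ → E × E}
  {s : Set ℝ} {a b : ℝ}

lemma isIntegralCurveOn_newtonField_iff :
    IsIntegralCurveOn γ (fun _ ↦ newtonField F) s ↔
      (∀ t ∈ s, HasDerivWithinAt (fun t ↦ (γ t).1) (γ t).2 s t) ∧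
        ∀ t ∈ s, HasDerivWithinAt (fun t ↦ (γ t).2) (F (γ t).1) s t :=
  ⟨fun h ↦ ⟨fun t ht ↦ by simpa [newtonField] using (h t ht).hasFDerivWithinAt.fst.hasDerivWithinAt,
      fun t ht ↦ by simpa [newtonField] using (h t ht).hasFDerivWithinAt.snd.hasDerivWithinAt⟩,
    fun h t ht ↦ (h.1 t ht).prodMk (h.2 t ht)⟩

lemma isIntegralCurveOn_newtonField_reflect
    (hγ : IsIntegralCurveOn γ (fun _ ↦ newtonField F) s) (c : ℝ) :
    IsIntegralCurveOn (fun t ↦ ((γ (c - t)).1, -(γ (c - t)).2)) (fun _ ↦ newtonField F)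
      ((c - ·) ⁻¹' s) := by
  rw [isIntegralCurveOn_newtonField_iff] at hγ ⊢
  have hreflect : ∀ t, HasDerivWithinAt (c - ·) (-1) ((c - ·) ⁻¹' s) t := fun t ↦
    (hasDerivWithinAt_id t _).const_sub c
  refine ⟨fun t ht ↦ ?_, fun t ht ↦ ?_⟩
  · exact ((hγ.1 (c - t) ht).scomp t (hreflect t) (mapsTo_preimage _ s)).congr_deriv
      (neg_one_smul ℝ _)
  · exact ((hγ.2 (c - t) ht).scomp t (hreflect t) (mapsTo_preimage _ s)).neg.congr_deriv
      (by rw [neg_one_smul, neg_neg])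

lemma eqOn_reflect_of_isIntegralCurveOn_newtonField (hF : LocallyLipschitz F)
    (hγ : IsIntegralCurveOn γ (fun _ ↦ newtonField F) (Icc a b))
    (hx : (γ b).1 = (γ a).1) (hv : (γ b).2 = -(γ a).2) :
    EqOn (fun t ↦ ((γ (a + b - t)).1, -(γ (a + b - t)).2)) γ (Icc a b) := by
  have hreflect := isIntegralCurveOn_newtonField_reflect hγ (a + b)
  rw [preimage_const_sub_Icc, add_sub_cancel_right, add_sub_cancel_left] at hreflect
  exact eqOn_Icc_of_isIntegralCurveOn (locallyLipschitz_newtonField hF) hreflect hγ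
    (by simp [hx, hv])

lemma velocity_midpoint_eq_zero (hab : a ≤ b) (hF : LocallyLipschitz F)
    (hγ : IsIntegralCurveOn γ (fun _ ↦ newtonField F) (Icc a b))
    (hx : (γ b).1 = (γ a).1) (hv : (γ b).2 = -(γ a).2) :
    (γ ((a + b) / 2)).2 = 0 := by
  have hmid : (a + b) / 2 ∈ Icc a b := ⟨by linarith, by linarith⟩
  have hsymm : -(γ (a + b - (a + b) / 2)).2 = (γ ((a + b) / 2)).2 :=
    congrArg Prod.snd (eqOn_reflect_of_isIntegralCurveOn_newtonField hF hγ hx hv hmid)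
  have : IsAddTorsionFree E := .of_isTorsionFree ℝ E
  rwa [sub_half, neg_eq_self] at hsymm

end NormedSpace

/-- The total energy of a unit mass at `p = (position, velocity)` in the potential `U`. -/
noncomputable def newtonEnergy {E : Type*} [Norm E] (U : E → ℝ) (p : E × E) : ℝ :=
  ‖p.2‖ ^ 2 / 2 + U p.1

lemma newtonEnergy_eq_of_isIntegralCurveOn {E : Type*} [NormedAddCommGroup E]
    [InnerProductSpace ℝ E] [CompleteSpace E] {F : E → E} {U : E → ℝ} {γ : ℝ → E × E}
    {s : Set ℝ} {t u : ℝ} (hU : ∀ x, HasGradientAt U (-F x) x) (hs : Convex ℝ s)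
    (hγ : IsIntegralCurveOn γ (fun _ ↦ newtonField F) s) (ht : t ∈ s) (hu : u ∈ s) :
    newtonEnergy U (γ t) = newtonEnergy U (γ u) := by
  obtain ⟨hvel, hacc⟩ := isIntegralCurveOn_newtonField_iff.1 hγ
  have hderiv : ∀ r ∈ s, HasDerivWithinAt (fun r ↦ newtonEnergy U (γ r)) 0 s r := by
    intro r hr
    have hkinetic := (hacc r hr).norm_sq.div_const 2
    have hpotential := (hU (γ r).1).hasFDerivAt.comp_hasDerivWithinAt r (hvel r hr)
    refine (hkinetic.add hpotential).congr_deriv ?_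
    simp [real_inner_comm]
  have hle := Convex.norm_image_sub_le_of_norm_hasDerivWithin_le hderiv
    (fun _ _ ↦ norm_zero.le) hs hu ht
  rwa [zero_mul, norm_le_zero_iff, sub_eq_zero] at hle

lemma velocity_right_eq_neg_left_of_isMinOn {F U : ℝ → ℝ} {γ : ℝ → ℝ × ℝ} {a b : ℝ} (hab : a < b)
    (hU : ∀ x, HasDerivAt U (-F x) x)
    (hγ : IsIntegralCurveOn γ (fun _ ↦ newtonField F) (Icc a b))
    (hmin_left : IsMinOn (fun t ↦ (γ t).1) (Icc a b) a)
    (hmin_right : IsMinOn (fun t ↦ (γ t).1) (Icc a b) b) :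
    (γ b).2 = -(γ a).2 := by
  have ha : a ∈ Icc a b := left_mem_Icc.2 hab.le
  have hb : b ∈ Icc a b := right_mem_Icc.2 hab.le
  have hderiv := (isIntegralCurveOn_newtonField_iff.1 hγ).1
  have hleft : 0 ≤ (γ a).2 := nonneg_of_mul_nonneg_right
    (sub_mul_nonneg_of_isLocalMinOn hmin_left.localize (hderiv a ha)
      (segment_eq_Icc hab.le).subset) (sub_pos.2 hab)
  have hright : (γ b).2 ≤ 0 := nonpos_of_mul_nonneg_right
    (sub_mul_nonneg_of_isLocalMinOn hmin_right.localize (hderiv b hb)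
      ((segment_symm ℝ b a).trans (segment_eq_Icc hab.le)).subset) (sub_neg.2 hab)
  have hx : (γ b).1 = (γ a).1 := le_antisymm (hmin_right ha) (hmin_left hb)
  have henergy : (γ b).2 ^ 2 = (γ a).2 ^ 2 := by
    simpa [newtonEnergy, hx] using
      newtonEnergy_eq_of_isIntegralCurveOn (fun x ↦ (hU x).hasGradientAt') (convex_Icc a b) hγ hb ha
  rwa [sq_eq_sq_iff_abs_eq_abs, abs_of_nonpos hright, abs_of_nonneg hleft, neg_eq_iff_eq_neg]
    at henergy

end NewtonEquation

section Duffing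

open Set

/-- The force in the Duffing equation `x'' = -x³ + βx`. -/
def duffingForce (β x : ℝ) : ℝ :=
  -x ^ 3 + β * x

/-- The potential of `duffingForce`, with the additive constant chosen to make it a multiple of a
square. -/
noncomputable def duffingPotential (β x : ℝ) : ℝ :=
  (x ^ 2 - β) ^ 2 / 4

variable {β : ℝ}

lemma locallyLipschitz_duffingForce : LocallyLipschitz (duffingForce β) :=
  ContDiff.locallyLipschitz (𝕂 := ℝ) (by unfold duffingForce; fun_prop)

lemma hasDerivAt_duffingPotential (x : ℝ) :
    HasDerivAt (duffingPotential β) (-duffingForce β x) x := by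
  refine ((((hasDerivAt_pow 2 x).sub_const β).pow 2).div_const 4).congr_deriv ?_
  simp only [duffingForce]
  ring

lemma duffing_energy_eq {γ : ℝ → ℝ × ℝ} {s : Set ℝ} {t u : ℝ} (hs : Convex ℝ s)
    (hγ : IsIntegralCurveOn γ (fun _ ↦ newtonField (duffingForce β)) s) (ht : t ∈ s) (hu : u ∈ s) :
    ((γ t).1 ^ 2 - β) ^ 2 + 2 * (γ t).2 ^ 2 = ((γ u).1 ^ 2 - β) ^ 2 + 2 * (γ u).2 ^ 2 := by
  have henergy := newtonEnergy_eq_of_isIntegralCurveOn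
    (fun x ↦ (hasDerivAt_duffingPotential x).hasGradientAt') hs hγ ht hu
  simp only [newtonEnergy, duffingPotential, norm_eq_abs, sq_abs] at henergy
  linarith

lemma eq_add_sqrt_of_sq_sub_eq {z c : ℝ} (hz : 0 < z) (hc : 0 ≤ c)
    (h : (z - β) ^ 2 = β ^ 2 + c) : z = β + √(β ^ 2 + c) := by
  have hβz : β ≤ z := by
    by_contra! hlt
    nlinarith
  rw [← h, sqrt_sq (sub_nonneg.2 hβz), add_sub_cancel]

theorem duffing_maximum_general {a b : ℝ} {f f' : ℝ → ℝ} (hab : a < b)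
    (hf : ∀ t ∈ Icc a b, HasDerivWithinAt f (f' t) (Icc a b) t)
    (hf' : ∀ t ∈ Icc a b, HasDerivWithinAt f' (-(f t) ^ 3 + β * f t) (Icc a b) t)
    (ha : f a = 0) (hb : f b = 0) (hpos : ∀ t ∈ Ioo a b, 0 < f t) :
    f' ((a + b) / 2) = 0 ∧
    f ((a + b) / 2) ^ 2 = β + √(β ^ 2 + 2 * f' a ^ 2) ∧
    (∀ t ∈ Icc a b, f t ≤ f ((a + b) / 2)) ∧
    (∀ t ∈ Icc a b, f t ^ 2 ≤ β + √(β ^ 2 + 2 * f' a ^ 2)) := by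
  have hγ : IsIntegralCurveOn (fun t ↦ (f t, f' t)) (fun _ ↦ newtonField (duffingForce β))
      (Icc a b) := isIntegralCurveOn_newtonField_iff.2 ⟨hf, hf'⟩
  have hmid : (a + b) / 2 ∈ Ioo a b := ⟨by linarith, by linarith⟩
  have hnonneg : ∀ t ∈ Icc a b, 0 ≤ f t := by
    intro t ht
    rcases eq_endpoints_or_mem_Ioo_of_mem_Icc ht with rfl | rfl | ht
    exacts [ha.ge, hb.ge, (hpos t ht).le]
  have hvel : f' b = -f' a := velocity_right_eq_neg_left_of_isMinOn hab hasDerivAt_duffingPotential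
    hγ (isMinOn_iff.2 fun t ht ↦ ha.trans_le (hnonneg t ht))
    (isMinOn_iff.2 fun t ht ↦ hb.trans_le (hnonneg t ht))
  have hmid_vel : f' ((a + b) / 2) = 0 := velocity_midpoint_eq_zero hab.le
    locallyLipschitz_duffingForce hγ (hb.trans ha.symm) hvel
  have henergy : ∀ t ∈ Icc a b, (f t ^ 2 - β) ^ 2 + 2 * f' t ^ 2 = β ^ 2 + 2 * f' a ^ 2 :=
    fun t ht ↦ by simpa [ha] using duffing_energy_eq (convex_Icc a b) hγ ht (left_mem_Icc.2 hab.le)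
  have hmid_sq : f ((a + b) / 2) ^ 2 = β + √(β ^ 2 + 2 * f' a ^ 2) :=
    eq_add_sqrt_of_sq_sub_eq (pow_pos (hpos _ hmid) 2) (by positivity)
      (by simpa [hmid_vel] using henergy _ (Ioo_subset_Icc_self hmid))
  have hsq_le : ∀ t ∈ Icc a b, f t ^ 2 ≤ β + √(β ^ 2 + 2 * f' a ^ 2) := fun t ht ↦
    sub_le_iff_le_add'.1 (le_sqrt_of_sq_le (by linarith [henergy t ht, sq_nonneg (f' t)]))
  exact ⟨hmid_vel, hmid_sq, fun t ht ↦ le_of_sq_le_sq ((hsq_le t ht).trans_eq hmid_sq.symm)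
    (hpos _ hmid).le, hsq_le⟩

end Duffing

/-- A Duffing solution attains its maximum at `t = 0`, with `f'(0) = 0` and
`f(0)² = β + √(β² + 2m²)`; in particular `f(t)² ≤ β + √(β² + 2m²)` on `[-T, T]`. -/
theorem duffing_maximum (m : ℕ) (hm : 0 < m) (β T : ℝ) (f : ℝ → ℝ)
    (h : IsDuffingSolution m β T f) :
    deriv f 0 = 0 ∧
    (f 0) ^ 2 = β + Real.sqrt (β ^ 2 + 2 * (m : ℝ) ^ 2) ∧
    (∀ t ∈ Set.Icc (-T) T, f t ≤ f 0) ∧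
    (∀ t ∈ Set.Icc (-T) T, (f t) ^ 2 ≤ β + Real.sqrt (β ^ 2 + 2 * (m : ℝ) ^ 2)) := by
  obtain ⟨hT, hf, hode, hleft, hright, hslope, -, hpos⟩ := h
  have hf2 : ContDiff ℝ 2 f := contDiff_infty.1 hf 2
  simpa [hslope] using duffing_maximum_general (β := β) (neg_lt_self hT)
    (fun t _ ↦ (hf2.differentiable two_ne_zero t).hasDerivAt.hasDerivWithinAt)
    (fun t ht ↦ hode t ht ▸ (hf2.differentiable_deriv_two t).hasDerivAt.hasDerivWithinAt)
    hleft hright hpos
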